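/- Let K be an algebraically closed field of characteristic zero. Let G ⊆ GL₄(K) be the set of matrices of the form [[1, a, d, b], [0, t, 0, c], [0, 0, 1, e], [0, 0, 0, 1]] with t ∈ K∖{0} and a, b, c, d, e ∈ K, and let H ⊆ G be the subset of such matrices with d = 0 and e = 0. Then G and H are subgroups of GL₄(K), and the subgroup of GL₄(K) generated by the diagonalizable elements of G equals H. -/

import Mathlib

/-- An element of `GL (Fin 4) K` is diagonalizable (semisimple) if its underlying matrix is
conjugate to a diagonal matrix. -/
def GLIsDiagonalizable {K : Type*} [Field K] (M : GL (Fin 4) K) : Prop :=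
  ∃ P : GL (Fin 4) K, ∃ dv : Fin 4 → K,
    (M : Matrix (Fin 4) (Fin 4) K) =
      (P : Matrix (Fin 4) (Fin 4) K) * Matrix.diagonal dv *
        ((P⁻¹ : GL (Fin 4) K) : Matrix (Fin 4) (Fin 4) K)

/-- The solvable group `G` of the Example. -/
def Gset (K : Type*) [Field K] : Set (GL (Fin 4) K) :=
  {M | ∃ t a b c d e : K, t ≠ 0 ∧
    (M : Matrix (Fin 4) (Fin 4) K) = !![1, a, d, b; 0, t, 0, c; 0, 0, 1, e; 0, 0, 0, 1]}

/-- The subgroup `H = G^mult` of the Example: the elements of `G` with `d = 0`, `e = 0`. -/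
def Hset (K : Type*) [Field K] : Set (GL (Fin 4) K) :=
  {M | ∃ t a b c : K, t ≠ 0 ∧
    (M : Matrix (Fin 4) (Fin 4) K) = !![1, a, 0, b; 0, t, 0, c; 0, 0, 1, 0; 0, 0, 0, 1]}

/-!
If `M ∈ G` is diagonalizable, then so is `N = M - 1`, hence `N` and `N ^ 2` have the same kernel on
column vectors and on row vectors. As `N ^ 2` kills the third standard vector from either side, so
does `N`, which forces `d = e = 0`.

Conversely, let `T t`, `X a`, `Y c`, `Z b` be the torus and root elements of `H`. All `G`-conjugates
of `T t` are diagonalizable, so the generated subgroup contains every commutator of `T t` with an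
element of `G`; for `t ≠ 1` these include all `X a` and `Y c`. Then it contains `Z b = ⁅X 1, Y b⁆`,
and `H` consists of the products `Z b * Y c * T t * X a`.
-/

namespace SolvableExample

open Matrix
open scoped commutatorElement

section Diagonalizable

variable {n R K : Type*} [Fintype n] [DecidableEq n] [CommRing R] [Field K]

/-- A square matrix of any size is diagonalizable if it is conjugate to a diagonal matrix. The
conjugation is written as the action of `ConjAct`, so that its compatibility with sums and products
comes from the library; for `4 × 4` matrices this unfolds to `GLIsDiagonalizable`. -/
def IsDiagonalizable (A : Matrix n n R) : Prop :=
  ∃ (P : ConjAct (GL n R)) (v : n → R), A = P • diagonal v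

theorem isDiagonalizable_diagonal (v : n → R) : IsDiagonalizable (diagonal v) :=
  ⟨1, v, (one_smul _ _).symm⟩

theorem IsDiagonalizable.smul {A : Matrix n n R} (hA : IsDiagonalizable A)
    (Q : ConjAct (GL n R)) : IsDiagonalizable (Q • A) := by
  obtain ⟨P, v, rfl⟩ := hA
  exact ⟨Q * P, v, smul_smul Q P _⟩

theorem IsDiagonalizable.sub_one {A : Matrix n n R} (hA : IsDiagonalizable A) :
    IsDiagonalizable (A - 1) := by
  obtain ⟨P, v, rfl⟩ := hA
  exact ⟨P, fun i ↦ v i - 1, by rw [← diagonal_sub, diagonal_one, smul_sub, smul_one]⟩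

theorem IsDiagonalizable.exists_commute_mul_mul_self {A : Matrix n n K}
    (hA : IsDiagonalizable A) : ∃ B, Commute A B ∧ A * B * A = A := by
  obtain ⟨P, v, rfl⟩ := hA
  -- Since `0⁻¹ = 0`, the identity `x * x⁻¹ * x = x` also holds at vanishing eigenvalues.
  refine ⟨P • diagonal v⁻¹, ?_, ?_⟩
  · simp only [Commute, SemiconjBy, ← smul_mul', diagonal_mul_diagonal, mul_comm]
  · simp only [← smul_mul', diagonal_mul_diagonal, Pi.inv_apply, mul_inv_mul_cancel]

theorem IsDiagonalizable.mulVec_eq_zero_of_mulVec_mulVec {A : Matrix n n K}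
    (hA : IsDiagonalizable A) {v : n → K} (hv : A *ᵥ A *ᵥ v = 0) : A *ᵥ v = 0 := by
  obtain ⟨B, hAB, hABA⟩ := hA.exists_commute_mul_mul_self
  rw [← hABA, hAB.eq, mul_assoc, ← mulVec_mulVec, ← mulVec_mulVec, hv, mulVec_zero]

theorem IsDiagonalizable.vecMul_eq_zero_of_vecMul_vecMul {A : Matrix n n K}
    (hA : IsDiagonalizable A) {v : n → K} (hv : v ᵥ* A ᵥ* A = 0) : v ᵥ* A = 0 := by
  obtain ⟨B, hAB, hABA⟩ := hA.exists_commute_mul_mul_self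
  rw [← hABA, mul_assoc, ← hAB.eq, ← mul_assoc, ← vecMul_vecMul, ← vecMul_vecMul, hv, zero_vecMul]

end Diagonalizable

section Elements

variable {R : Type*} [CommRing R]

/-- The matrix of the Example with parameters `t, a, b, c, d, e`, for an arbitrary `t`. -/
def gMatrix (t a b c d e : R) : Matrix (Fin 4) (Fin 4) R :=
  !![1, a, d, b; 0, t, 0, c; 0, 0, 1, e; 0, 0, 0, 1]

theorem gMatrix_mul (t a b c d e t' a' b' c' d' e' : R) :
    gMatrix t a b c d e * gMatrix t' a' b' c' d' e' =
      gMatrix (t * t') (a' + a * t') (b' + a * c' + d * e' + b) (t * c' + c) (d' + d)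
        (e' + e) := by
  ext i j
  fin_cases i <;> fin_cases j <;> simp [gMatrix, mul_apply, Fin.sum_univ_four]

theorem gMatrix_diagonal (t : R) : gMatrix t 0 0 0 0 0 = diagonal ![1, t, 1, 1] := by
  ext i j
  fin_cases i <;> fin_cases j <;> rfl

theorem gMatrix_one : gMatrix (1 : R) 0 0 0 0 0 = 1 := by
  ext i j
  fin_cases i <;> fin_cases j <;> rfl

/-- The element of `G` with parameters `t, a, b, c, d, e`. -/
def gElem (t : Rˣ) (a b c d e : R) : GL (Fin 4) R where
  val := gMatrix t a b c d e
  inv := gMatrix ↑t⁻¹ (-a * ↑t⁻¹) (a * ↑t⁻¹ * c + d * e - b) (-↑t⁻¹ * c) (-d) (-e)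
  val_inv := by
    rw [gMatrix_mul, ← gMatrix_one]
    congr 1
    case e_b => ring
    all_goals simp
  inv_val := by
    rw [gMatrix_mul, ← gMatrix_one]
    congr 1
    case e_b => ring
    all_goals simp

theorem gElem_mul (t t' : Rˣ) (a b c d e a' b' c' d' e' : R) :
    gElem t a b c d e * gElem t' a' b' c' d' e' =
      gElem (t * t') (a' + a * t') (b' + a * c' + d * e' + b) (t * c' + c) (d' + d) (e' + e) :=
  Units.ext (gMatrix_mul ..)

theorem gElem_one : gElem (1 : Rˣ) 0 0 0 0 0 = 1 :=
  Units.ext gMatrix_one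

theorem gElem_inv (t : Rˣ) (a b c d e : R) :
    (gElem t a b c d e)⁻¹ =
      gElem t⁻¹ (-a * ↑t⁻¹) (a * ↑t⁻¹ * c + d * e - b) (-↑t⁻¹ * c) (-d) (-e) :=
  Units.ext rfl

/-- The torus element `T t` of `H`, whose conjugates supply all the diagonalizable elements needed
to generate `H`. -/
def torus (t : Rˣ) : GL (Fin 4) R := gElem t 0 0 0 0 0

/-- The element `X a` of the root subgroup of `H` in the matrix position of `a`. -/
def rootX (a : R) : GL (Fin 4) R := gElem 1 a 0 0 0 0

/-- The element `Y c` of the root subgroup of `H` in the matrix position of `c`. -/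
def rootY (c : R) : GL (Fin 4) R := gElem 1 0 0 c 0 0

/-- The element `Z b` of the root subgroup of `H` in the matrix position of `b`; these elements form
the commutator subgroup of the unipotent radical. -/
def rootZ (b : R) : GL (Fin 4) R := gElem 1 0 b 0 0 0

theorem commutator_torus_rootX (t : Rˣ) (a : R) :
    ⁅torus t, rootX a⁆ = rootX (a * (↑t⁻¹ - 1)) := by
  simp only [commutatorElement_def, torus, rootX, gElem_mul, gElem_inv]
  congr 1 <;> simp [mul_sub, mul_comm, neg_add_eq_sub]

theorem commutator_torus_rootY (t : Rˣ) (c : R) :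
    ⁅torus t, rootY c⁆ = rootY (c * (t - 1)) := by
  simp only [commutatorElement_def, torus, rootY, gElem_mul, gElem_inv]
  congr 1 <;> simp [mul_sub, mul_comm, neg_add_eq_sub]

theorem commutator_rootX_rootY (a c : R) : ⁅rootX a, rootY c⁆ = rootZ (a * c) := by
  simp only [commutatorElement_def, rootX, rootY, rootZ, gElem_mul, gElem_inv]
  congr 1 <;> simp

theorem gElem_eq_rootZ_mul_rootY_mul_torus_mul_rootX (t : Rˣ) (a b c : R) :
    gElem t a b c 0 0 = rootZ b * rootY c * torus t * rootX a := by
  simp [torus, rootX, rootY, rootZ, gElem_mul]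

end Elements

variable {K : Type*} [Field K]

theorem mem_Gset_iff {M : GL (Fin 4) K} :
    M ∈ Gset K ↔ ∃ t a b c d e, M = gElem t a b c d e := by
  constructor
  · rintro ⟨t, a, b, c, d, e, ht, hM⟩
    exact ⟨Units.mk0 t ht, a, b, c, d, e, Units.ext hM⟩
  · rintro ⟨t, a, b, c, d, e, rfl⟩
    exact ⟨t, a, b, c, d, e, t.ne_zero, rfl⟩

theorem mem_Hset_iff {M : GL (Fin 4) K} : M ∈ Hset K ↔ ∃ t a b c, M = gElem t a b c 0 0 := by
  constructor
  · rintro ⟨t, a, b, c, ht, hM⟩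
    exact ⟨Units.mk0 t ht, a, b, c, Units.ext hM⟩
  · rintro ⟨t, a, b, c, rfl⟩
    exact ⟨t, a, b, c, t.ne_zero, rfl⟩

variable (K) in
/-- The set `Gset K` as a subgroup of `GL₄(K)`. -/
def subgroupG : Subgroup (GL (Fin 4) K) where
  carrier := Gset K
  one_mem' := mem_Gset_iff.2 ⟨1, 0, 0, 0, 0, 0, gElem_one.symm⟩
  mul_mem' hM hN := by
    obtain ⟨t, a, b, c, d, e, rfl⟩ := mem_Gset_iff.1 hM
    obtain ⟨t', a', b', c', d', e', rfl⟩ := mem_Gset_iff.1 hN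
    exact mem_Gset_iff.2 ⟨_, _, _, _, _, _, gElem_mul ..⟩
  inv_mem' hM := by
    obtain ⟨t, a, b, c, d, e, rfl⟩ := mem_Gset_iff.1 hM
    exact mem_Gset_iff.2 ⟨_, _, _, _, _, _, gElem_inv ..⟩

variable (K) in
/-- The set `Hset K` as a subgroup of `GL₄(K)`. -/
def subgroupH : Subgroup (GL (Fin 4) K) where
  carrier := Hset K
  one_mem' := mem_Hset_iff.2 ⟨1, 0, 0, 0, gElem_one.symm⟩
  mul_mem' hM hN := by
    obtain ⟨t, a, b, c, rfl⟩ := mem_Hset_iff.1 hM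
    obtain ⟨t', a', b', c', rfl⟩ := mem_Hset_iff.1 hN
    rw [gElem_mul, add_zero (0 : K)]
    exact mem_Hset_iff.2 ⟨_, _, _, _, rfl⟩
  inv_mem' hM := by
    obtain ⟨t, a, b, c, rfl⟩ := mem_Hset_iff.1 hM
    rw [gElem_inv, neg_zero]
    exact mem_Hset_iff.2 ⟨_, _, _, _, rfl⟩

theorem gElem_mem_subgroupG (t : Kˣ) (a b c d e : K) : gElem t a b c d e ∈ subgroupG K :=
  mem_Gset_iff.2 ⟨t, a, b, c, d, e, rfl⟩

theorem eq_zero_of_isDiagonalizable_gMatrix {t a b c d e : K}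
    (h : IsDiagonalizable (gMatrix t a b c d e)) : d = 0 ∧ e = 0 := by
  let N := gMatrix t a b c d e - 1
  have hcol : N *ᵥ Pi.single 2 1 = Pi.single 0 d := by
    ext i
    fin_cases i <;> simp [N, gMatrix]
  have hcol' : N *ᵥ Pi.single 0 d = 0 := by
    ext i
    fin_cases i <;> simp [N, gMatrix]
  have hrow : Pi.single 2 1 ᵥ* N = Pi.single 3 e := by
    ext i
    fin_cases i <;> simp [N, gMatrix]
  have hrow' : Pi.single 3 e ᵥ* N = 0 := by
    ext i
    fin_cases i <;> simp [N, gMatrix]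
  have hd : N *ᵥ Pi.single 2 1 = 0 :=
    h.sub_one.mulVec_eq_zero_of_mulVec_mulVec (by rw [hcol, hcol'])
  have he : Pi.single 2 1 ᵥ* N = 0 :=
    h.sub_one.vecMul_eq_zero_of_vecMul_vecMul (by rw [hrow, hrow'])
  rw [hcol, Pi.single_eq_zero_iff] at hd
  rw [hrow, Pi.single_eq_zero_iff] at he
  exact ⟨hd, he⟩

theorem mem_Hset_of_gLIsDiagonalizable {M : GL (Fin 4) K} (hG : M ∈ Gset K)
    (hM : GLIsDiagonalizable M) : M ∈ Hset K := by
  obtain ⟨t, a, b, c, d, e, rfl⟩ := mem_Gset_iff.1 hG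
  obtain ⟨rfl, rfl⟩ := eq_zero_of_isDiagonalizable_gMatrix hM
  exact mem_Hset_iff.2 ⟨t, a, b, c, rfl⟩

variable (K) in
/-- The subgroup `G^mult` generated by the diagonalizable elements of `G`. -/
abbrev gMult : Subgroup (GL (Fin 4) K) :=
  Subgroup.closure {M : GL (Fin 4) K | M ∈ Gset K ∧ GLIsDiagonalizable M}

theorem conj_torus_mem_gMult (t : Kˣ) {Q : GL (Fin 4) K} (hQ : Q ∈ subgroupG K) :
    Q * torus t * Q⁻¹ ∈ gMult K := by
  refine Subgroup.subset_closure ⟨?_, ?_⟩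
  · exact mul_mem (mul_mem hQ (gElem_mem_subgroupG ..)) (inv_mem hQ)
  · have hT : IsDiagonalizable (gMatrix (t : K) 0 0 0 0 0) :=
      gMatrix_diagonal (t : K) ▸ isDiagonalizable_diagonal _
    exact hT.smul (ConjAct.toConjAct Q)

theorem torus_mem_gMult (t : Kˣ) : torus t ∈ gMult K := by
  simpa using conj_torus_mem_gMult t (one_mem (subgroupG K))

theorem commutator_torus_mem_gMult (t : Kˣ) {Q : GL (Fin 4) K} (hQ : Q ∈ subgroupG K) :
    ⁅torus t, Q⁆ ∈ gMult K := by
  have h := mul_mem (torus_mem_gMult t) (inv_mem (conj_torus_mem_gMult t hQ))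
  rwa [conj_inv, ← mul_assoc, ← mul_assoc] at h

variable [Nontrivial Kˣ]

theorem rootX_mem_gMult (a : K) : rootX a ∈ gMult K := by
  obtain ⟨t, ht⟩ := exists_ne (1 : Kˣ)
  have ht' : (↑t⁻¹ : K) - 1 ≠ 0 := by
    rwa [sub_ne_zero, Ne, Units.val_eq_one, inv_eq_one]
  rw [← div_mul_cancel₀ a ht', ← commutator_torus_rootX]
  exact commutator_torus_mem_gMult t (gElem_mem_subgroupG ..)

theorem rootY_mem_gMult (c : K) : rootY c ∈ gMult K := by
  obtain ⟨t, ht⟩ := exists_ne (1 : Kˣ)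
  have ht' : (t : K) - 1 ≠ 0 := by
    rwa [sub_ne_zero, Ne, Units.val_eq_one]
  rw [← div_mul_cancel₀ c ht', ← commutator_torus_rootY]
  exact commutator_torus_mem_gMult t (gElem_mem_subgroupG ..)

theorem rootZ_mem_gMult (b : K) : rootZ b ∈ gMult K := by
  rw [← one_mul b, ← commutator_rootX_rootY, commutatorElement_def]
  have hX := rootX_mem_gMult (1 : K)
  have hY := rootY_mem_gMult b
  exact mul_mem (mul_mem (mul_mem hX hY) (inv_mem hX)) (inv_mem hY)

theorem gMult_eq_subgroupH : gMult K = subgroupH K := by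
  refine le_antisymm ((Subgroup.closure_le _).2 fun M hM ↦ ?_) fun M hM ↦ ?_
  · exact mem_Hset_of_gLIsDiagonalizable hM.1 hM.2
  · obtain ⟨t, a, b, c, rfl⟩ := mem_Hset_iff.1 hM
    rw [gElem_eq_rootZ_mul_rootY_mul_torus_mul_rootX]
    exact mul_mem (mul_mem (mul_mem (rootZ_mem_gMult b) (rootY_mem_gMult c)) (torus_mem_gMult t))
      (rootX_mem_gMult a)

end SolvableExample

theorem stmt8_general (K : Type*) [Field K] [Nontrivial Kˣ] :
    (∃ G : Subgroup (GL (Fin 4) K), (G : Set (GL (Fin 4) K)) = Gset K) ∧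
    (∃ H : Subgroup (GL (Fin 4) K), (H : Set (GL (Fin 4) K)) = Hset K) ∧
    ((Subgroup.closure {M : GL (Fin 4) K | M ∈ Gset K ∧ GLIsDiagonalizable M} :
        Subgroup (GL (Fin 4) K)) : Set (GL (Fin 4) K)) = Hset K :=
  ⟨⟨SolvableExample.subgroupG K, rfl⟩, ⟨SolvableExample.subgroupH K, rfl⟩,
    congrArg SetLike.coe SolvableExample.gMult_eq_subgroupH⟩

/-- `G` and `H` are subgroups of `GL₄(K)`, and the subgroup generated by the diagonalizable
elements of `G` is exactly `H`. -/
theorem stmt8 (K : Type*) [Field K] [IsAlgClosed K] [CharZero K] :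
    (∃ G : Subgroup (GL (Fin 4) K), (G : Set (GL (Fin 4) K)) = Gset K) ∧
    (∃ H : Subgroup (GL (Fin 4) K), (H : Set (GL (Fin 4) K)) = Hset K) ∧
    ((Subgroup.closure {M : GL (Fin 4) K | M ∈ Gset K ∧ GLIsDiagonalizable M} :
        Subgroup (GL (Fin 4) K)) : Set (GL (Fin 4) K)) = Hset K := by
  have : Nontrivial Kˣ := ⟨Units.mk0 2 two_ne_zero, 1, by simp [Units.ext_iff]⟩
  exact stmt8_general K
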